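/- For every ℓ ∈ {0,1,…,k′−1} and every z ∈ I_ℓ, the derivative at z of the function g(z) = z·R(z) / ((z−1)·√(p₀(z))) is nonzero (where I₀ = (0,∞)∖{1} and I_ℓ = (x_{2ℓ}, x_{2ℓ−1}) for ℓ ≥ 1, and p₀ > 0 on each I_ℓ). -/

import Mathlib

open Polynomial Matrix

/-- The matrix `A_m(z)` with rows `(z + α β⁻¹, α + β)` and `(z(α⁻¹+β⁻¹), z + β α⁻¹)`. -/
noncomputable def aztecA (a b : ℝ) (z : ℂ) : Matrix (Fin 2) (Fin 2) ℂ :=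
  !![z + (a : ℂ) * ((b : ℂ))⁻¹, (a : ℂ) + (b : ℂ);
     z * (((a : ℂ))⁻¹ + ((b : ℂ))⁻¹), z + (b : ℂ) * ((a : ℂ))⁻¹]

/-- `T(z) = A_1(z) A_2(z) ⋯ A_k(z)`. -/
noncomputable def aztecT {k : ℕ} (α β : Fin k → ℝ) (z : ℂ) : Matrix (Fin 2) (Fin 2) ℂ :=
  (List.ofFn fun m => aztecA (α m) (β m) z).prod
/-- The function `g(z) = z R(z) / ((z−1) √(p₀(z)))`, which up to sign is `z ρ₁′(z)/ρ₁(z)`. -/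
noncomputable def aztecg (R p₀ : Polynomial ℝ) (z : ℝ) : ℝ :=
  z * R.eval z / ((z - 1) * Real.sqrt (p₀.eval z))

/-!
Write `D` for the monic polynomial with roots `x₁, …, x_{2(k'-1)}`, so that `p₀ = a X D`, `a > 0`.

Since `q R` is, up to a power of `X - 1`, the Wronskian of `(X - 1) ^ k` and the trace, the
eigenvalue `ρ` of the symbol satisfies `ρ' / ρ = R / ((z - 1) √p₀)`. On each closed gap
`[x_{2ℓ}, x_{2ℓ-1}]` it is continuous, nonvanishing and equal to `±1` at both end points, so Rolle's
theorem gives a zero of `R` inside. These `k' - 1` zeros are all the zeros of `R`, and are simple.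

Suppose `g' = 0` at a point where `g = c`. If `c = 0`, that point is a double root of `R`, which is
impossible. If `c ≠ 0`, it is a double root of `X R ^ 2 - a c ^ 2 (X - 1) ^ 2 D`, a polynomial of
degree `2k'`. This polynomial is negative at the end points of every gap and positive at the zero of
`R` inside, and it is also negative at `0`, positive at `1` and negative near `∞`; so it has `2k'`
distinct real roots, and none of them is double.
-/

section PolynomialRoots

lemma eq_of_forall_aeval_eq {K A : Type*} [CommRing K] [CommRing A] [IsDomain A] [Infinite A]
    [Algebra K A] [FaithfulSMul K A] {f g : K[X]} (h : ∀ z : A, aeval z f = aeval z g) : f = g :=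
  map_injective (algebraMap K A) (FaithfulSMul.algebraMap_injective K A) <|
    Polynomial.funext fun z => by simpa only [eval_map_algebraMap] using h z

lemma roots_eq_map_of_injective {K ι : Type*} [CommRing K] [IsDomain K] [Fintype ι] {f : K[X]}
    (hf : f ≠ 0) {y : ι → K} (hy : Function.Injective y) (hroot : ∀ i, f.eval (y i) = 0)
    (hdeg : f.natDegree ≤ Fintype.card ι) : f.roots = Finset.univ.val.map y :=
  roots_eq_of_natDegree_le_card_of_ne_zero (S := Finset.univ.map ⟨y, hy⟩)
    (by simpa using hroot) (by simpa using hdeg) hf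

lemma eq_C_leadingCoeff_mul_prod_of_injective {K ι : Type*} [CommRing K] [IsDomain K] [Fintype ι]
    {f : K[X]} (hf : f ≠ 0) {y : ι → K} (hy : Function.Injective y)
    (hroot : ∀ i, f.eval (y i) = 0) (hdeg : f.natDegree = Fintype.card ι) :
    f = C f.leadingCoeff * ∏ i, (X - C (y i)) := by
  have hroots := roots_eq_map_of_injective hf hy hroot hdeg.le
  have hcard : f.roots.card = f.natDegree := by simp [hroots, hdeg]
  conv_lhs => rw [← C_leadingCoeff_mul_prod_multiset_X_sub_C hcard, hroots, Multiset.map_map]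
  rfl

lemma eval_derivative_ne_zero_of_nodup_roots {K : Type*} [CommRing K] [IsDomain K] {f : K[X]}
    (hf : f ≠ 0) (hnodup : f.roots.Nodup) {r : K} (hr : f.eval r = 0) :
    (derivative f).eval r ≠ 0 := by
  classical
  intro hr'
  have hone : f.rootMultiplicity r ≤ 1 := by
    simpa only [count_roots] using Multiset.nodup_iff_count_le_one.mp hnodup r
  exact hone.not_gt ((one_lt_rootMultiplicity_iff_isRoot hf).mpr ⟨hr, hr'⟩)

lemma isRoot_of_mul_derivative_eq_mul {K : Type*} [CommRing K] [IsDomain K] [CharZero K]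
    {f g h : K[X]} (hf : f ≠ 0) (hode : g * derivative f = h * f) {r : K} (hr : f.IsRoot r) :
    g.IsRoot r := by
  by_contra hgr
  have hg : g ≠ 0 := by
    rintro rfl
    simp at hgr
  have hf' : derivative f ≠ 0 := by
    intro hf'
    rw [eq_C_of_derivative_eq_zero hf', IsRoot.def, eval_C] at hr
    exact hf (by rw [eq_C_of_derivative_eq_zero hf', hr, C_0])
  have hle : f.rootMultiplicity r ≤ (g * derivative f).rootMultiplicity r :=
    rootMultiplicity_le_rootMultiplicity_of_dvd (mul_ne_zero hg hf') ⟨h, by rw [hode, mul_comm]⟩ r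
  rw [rootMultiplicity_mul (mul_ne_zero hg hf'), rootMultiplicity_eq_zero hgr, zero_add,
    derivative_rootMultiplicity_of_root hr] at hle
  have hpos : 0 < f.rootMultiplicity r := (rootMultiplicity_pos hf).mpr hr
  omega

lemma exists_eval_eq_zero_mem_Ioo {f : ℝ[X]} {a b : ℝ} (hab : a < b)
    (h : f.eval a * f.eval b < 0) : ∃ r ∈ Set.Ioo a b, f.eval r = 0 := by
  rcases mul_neg_iff.mp h with ⟨ha, hb⟩ | ⟨ha, hb⟩
  · exact intermediate_value_Ioo' hab.le f.continuous.continuousOn ⟨hb, ha⟩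
  · exact intermediate_value_Ioo hab.le f.continuous.continuousOn ⟨ha, hb⟩

lemma injective_of_mem_of_pairwise_disjoint {ι α : Type*} {S : ι → Set α}
    (hS : Pairwise (Function.onFun Disjoint S)) {y : ι → α} (hy : ∀ i, y i ∈ S i) :
    Function.Injective y :=
  fun i j hij => hS.eq (Set.not_disjoint_iff.mpr ⟨y i, hy i, hij ▸ hy j⟩)

lemma nodup_roots_of_neg_pos_neg {ι : Type*} [Fintype ι] {f : ℝ[X]}
    (hdeg : f.natDegree ≤ 2 * Fintype.card ι) {a b : ι → ℝ}
    (hdisj : Pairwise (Function.onFun Disjoint fun i => Set.Icc (a i) (b i)))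
    (ha : ∀ i, f.eval (a i) < 0) (hb : ∀ i, f.eval (b i) < 0)
    (hmid : ∀ i, ∃ m ∈ Set.Ioo (a i) (b i), 0 < f.eval m) : f.roots.Nodup := by
  rcases eq_or_ne f 0 with rfl | hf
  · simp
  choose m hm hfm using hmid
  choose u hu hfu using fun i =>
    exists_eval_eq_zero_mem_Ioo (hm i).1 (mul_neg_of_neg_of_pos (ha i) (hfm i))
  choose v hv hfv using fun i =>
    exists_eval_eq_zero_mem_Ioo (hm i).2 (mul_neg_of_pos_of_neg (hfm i) (hb i))
  have hu' : ∀ i, u i ∈ Set.Icc (a i) (b i) := fun i => ⟨(hu i).1.le, ((hu i).2.trans (hm i).2).le⟩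
  have hv' : ∀ i, v i ∈ Set.Icc (a i) (b i) := fun i => ⟨((hm i).1.trans (hv i).1).le, (hv i).2.le⟩
  have huv : ∀ i j, u i ≠ v j := by
    intro i j hij
    obtain rfl : i = j := hdisj.eq (Set.not_disjoint_iff.mpr ⟨u i, hu' i, hij ▸ hv' j⟩)
    exact ((hu i).2.trans (hv i).1).ne hij
  have hinj : Function.Injective (Sum.elim u v) :=
    (injective_of_mem_of_pairwise_disjoint hdisj hu').sumElim
      (injective_of_mem_of_pairwise_disjoint hdisj hv') huv
  rw [roots_eq_map_of_injective hf hinj (Sum.forall.mpr ⟨hfu, hfv⟩)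
    (by rwa [Fintype.card_sum, ← two_mul])]
  exact Finset.univ.nodup.map hinj

end PolynomialRoots

section SymbolEigenvalue

lemma eq_of_sq_eq_sq_of_isPreconnected {α : Type*} [TopologicalSpace α] {S : Set α}
    (hS : IsPreconnected S) {f : α → ℝ} (hf : ContinuousOn f S) (hne : ∀ z ∈ S, f z ≠ 0) {a b : α}
    (ha : a ∈ S) (hb : b ∈ S) (hsq : f a ^ 2 = f b ^ 2) : f a = f b := by
  have habs : |f a| = |f b| := (sq_eq_sq_iff_abs_eq_abs _ _).mp hsq
  rcases hS.eq_or_eq_neg_of_sq_eq hf hf.abs (fun z _ => (sq_abs (f z)).symm)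
    (fun hz => abs_ne_zero.mpr (hne _ hz)) with h | h
  · exact (h ha).trans (habs.trans (h hb).symm)
  · exact (h ha).trans ((congrArg Neg.neg habs).trans (h hb).symm)

lemma sub_one_mul_derivative_pow {A : Type*} [CommRing A] (k : ℕ) :
    (X - 1 : A[X]) * derivative ((X - 1) ^ k) = C (k : A) * (X - 1) ^ k := by
  cases k with
  | zero => simp
  | succ n =>
    rw [derivative_pow]
    simp only [derivative_sub, derivative_X, derivative_one, Nat.add_sub_cancel]
    ring

lemma sub_one_mul_derivative_discriminant {A : Type*} [CommRing A] {k : ℕ} {τ q R : A[X]}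
    (hR : (X - 1) * derivative τ - C (k : A) * τ = q * R) :
    (X - 1) * derivative (τ ^ 2 - 4 * (X - 1) ^ (2 * k)) =
      2 * C (k : A) * (τ ^ 2 - 4 * (X - 1) ^ (2 * k)) + 2 * q * τ * R := by
  have hpow : (X - 1 : A[X]) * derivative ((X - 1) ^ (2 * k)) =
      2 * C (k : A) * (X - 1) ^ (2 * k) := by
    rw [sub_one_mul_derivative_pow, Nat.cast_mul, C_mul, Nat.cast_ofNat, C_ofNat]
  rw [derivative_sub, derivative_mul, derivative_ofNat, derivative_sq, C_ofNat]
  linear_combination 2 * τ * hR - 4 * hpow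

variable {k : ℕ} {τ q p₀ R : ℝ[X]}

lemma two_mul_trace_mul_quotient (hq : q ≠ 0)
    (hdisc : τ ^ 2 - 4 * (X - 1) ^ (2 * k) = q ^ 2 * p₀)
    (hR : (X - 1) * derivative τ - C (k : ℝ) * τ = q * R) :
    2 * τ * R = (X - 1) * (2 * derivative q * p₀ + q * derivative p₀)
      - 2 * C (k : ℝ) * q * p₀ := by
  have h := sub_one_mul_derivative_discriminant hR
  rw [hdisc, derivative_mul, derivative_sq, C_ofNat] at h
  apply mul_left_cancel₀ hq
  linear_combination -h

lemma quotient_ne_zero_of_isRoot (hne : q ^ 2 * p₀ ≠ 0)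
    (hdisc : τ ^ 2 - 4 * (X - 1) ^ (2 * k) = q ^ 2 * p₀)
    (hR : (X - 1) * derivative τ - C (k : ℝ) * τ = q * R) {r : ℝ} (hr : p₀.IsRoot r)
    (hr1 : r ≠ 1) : R ≠ 0 := by
  rintro rfl
  have hode := sub_one_mul_derivative_discriminant hR
  rw [hdisc, mul_zero, add_zero] at hode
  have hroot : (X - 1 : ℝ[X]).IsRoot r :=
    isRoot_of_mul_derivative_eq_mul hne hode (hr.dvd (dvd_mul_left _ _))
  exact hr1 (sub_eq_zero.mp (by simpa using hroot))

/-- The eigenvalue `ρ` of the symbol `Φ(z) = T(z) / (z - 1) ^ k`, written through the trace `τ` of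
`T` and the factorization `τ ^ 2 - 4 (z - 1) ^ (2k) = q ^ 2 p₀` of the discriminant. As `q` enters
only through the sign of the square root, `-q` in place of `q` gives the other eigenvalue. -/
noncomputable def symbolEigenvalue (k : ℕ) (τ q p₀ : ℝ[X]) (z : ℝ) : ℝ :=
  (τ.eval z + q.eval z * √(p₀.eval z)) / (2 * (z - 1) ^ k)

lemma symbolEigenvalue_mul_symbolEigenvalue_neg
    (hdisc : τ ^ 2 - 4 * (X - 1) ^ (2 * k) = q ^ 2 * p₀) {z : ℝ} (hz1 : z ≠ 1)
    (hz : 0 ≤ p₀.eval z) : symbolEigenvalue k τ q p₀ z * symbolEigenvalue k τ (-q) p₀ z = 1 := by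
  have hsqrt : √(p₀.eval z) ^ 2 = p₀.eval z := Real.sq_sqrt hz
  have hpow : (2 * (z - 1) ^ k : ℝ) ≠ 0 := by simp [sub_ne_zero.mpr hz1]
  have hdisc_z : τ.eval z ^ 2 - 4 * (z - 1) ^ (2 * k) = q.eval z ^ 2 * p₀.eval z := by
    simpa using congrArg (eval z) hdisc
  rw [symbolEigenvalue, symbolEigenvalue, div_mul_div_comm,
    div_eq_one_iff_eq (mul_ne_zero hpow hpow), eval_neg]
  linear_combination hdisc_z - q.eval z ^ 2 * hsqrt

lemma symbolEigenvalue_ne_zero (hdisc : τ ^ 2 - 4 * (X - 1) ^ (2 * k) = q ^ 2 * p₀) {z : ℝ}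
    (hz1 : z ≠ 1) (hz : 0 ≤ p₀.eval z) : symbolEigenvalue k τ q p₀ z ≠ 0 :=
  left_ne_zero_of_mul_eq_one (symbolEigenvalue_mul_symbolEigenvalue_neg hdisc hz1 hz)

lemma symbolEigenvalue_sq_of_isRoot (hdisc : τ ^ 2 - 4 * (X - 1) ^ (2 * k) = q ^ 2 * p₀) {z : ℝ}
    (hz1 : z ≠ 1) (hz : p₀.eval z = 0) : symbolEigenvalue k τ q p₀ z ^ 2 = 1 := by
  have h := symbolEigenvalue_mul_symbolEigenvalue_neg hdisc hz1 hz.ge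
  have hneg : symbolEigenvalue k τ (-q) p₀ z = symbolEigenvalue k τ q p₀ z := by
    simp [symbolEigenvalue, hz]
  rwa [hneg, ← sq] at h

lemma continuousOn_symbolEigenvalue (k : ℕ) (τ q p₀ : ℝ[X]) :
    ContinuousOn (symbolEigenvalue k τ q p₀) {1}ᶜ := by
  refine ContinuousOn.div (by fun_prop) (by fun_prop) fun z hz => ?_
  simp [sub_ne_zero.mpr hz]

lemma hasDerivAt_div_of_eq_mul {𝕜 : Type*} [NontriviallyNormedField 𝕜] {f g : 𝕜 → 𝕜} {a b x : 𝕜}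
    (hf : HasDerivAt f (f x * a) x) (hg : HasDerivAt g (g x * b) x) (hx : g x ≠ 0) :
    HasDerivAt (fun y => f y / g y) (f x / g x * (a - b)) x := by
  refine (hf.div hg hx).congr_deriv ?_
  field_simp

lemma hasDerivAt_sub_const_pow {𝕜 : Type*} [NontriviallyNormedField 𝕜] (c : 𝕜) (n : ℕ) {x : 𝕜}
    (hx : x ≠ c) : HasDerivAt (fun y => (y - c) ^ n) ((x - c) ^ n * (n / (x - c))) x := by
  have hx' : x - c ≠ 0 := sub_ne_zero.mpr hx
  refine (((hasDerivAt_id x).sub_const c).fun_pow n).congr_deriv ?_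
  cases n with
  | zero => simp
  | succ n =>
    simp only [id, Nat.add_sub_cancel]
    field_simp
    ring

lemma hasDerivAt_trace_add_mul_sqrt (hq : q ≠ 0)
    (hdisc : τ ^ 2 - 4 * (X - 1) ^ (2 * k) = q ^ 2 * p₀)
    (hR : (X - 1) * derivative τ - C (k : ℝ) * τ = q * R) {z : ℝ} (hz1 : z ≠ 1)
    (hz : 0 < p₀.eval z) :
    HasDerivAt (fun w => τ.eval w + q.eval w * √(p₀.eval w))
      ((τ.eval z + q.eval z * √(p₀.eval z)) *
        (R.eval z / ((z - 1) * √(p₀.eval z)) + k / (z - 1))) z := by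
  have hz1' : z - 1 ≠ 0 := sub_ne_zero.mpr hz1
  have hsqrt : √(p₀.eval z) ^ 2 = p₀.eval z := Real.sq_sqrt hz.le
  have hsqrt_ne : √(p₀.eval z) ≠ 0 := (Real.sqrt_pos.mpr hz).ne'
  have hquot_z : (z - 1) * (derivative τ).eval z - k * τ.eval z = q.eval z * R.eval z := by
    simpa using congrArg (eval z) hR
  have htrace_z : 2 * τ.eval z * R.eval z =
      (z - 1) * (2 * (derivative q).eval z * p₀.eval z + q.eval z * (derivative p₀).eval z)
        - 2 * k * q.eval z * p₀.eval z := by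
    simpa using congrArg (eval z) (two_mul_trace_mul_quotient hq hdisc hR)
  refine ((τ.hasDerivAt z).add
    ((q.hasDerivAt z).fun_mul ((p₀.hasDerivAt z).sqrt hz.ne'))).congr_deriv ?_
  field_simp
  linear_combination 2 * √(p₀.eval z) * hquot_z - htrace_z
    + 2 * ((z - 1) * (derivative q).eval z - k * q.eval z) * hsqrt

lemma hasDerivAt_symbolEigenvalue (hq : q ≠ 0)
    (hdisc : τ ^ 2 - 4 * (X - 1) ^ (2 * k) = q ^ 2 * p₀)
    (hR : (X - 1) * derivative τ - C (k : ℝ) * τ = q * R) {z : ℝ} (hz1 : z ≠ 1)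
    (hz : 0 < p₀.eval z) :
    HasDerivAt (symbolEigenvalue k τ q p₀)
      (symbolEigenvalue k τ q p₀ z * (R.eval z / ((z - 1) * √(p₀.eval z)))) z := by
  have hden := (hasDerivAt_sub_const_pow 1 k hz1).const_mul 2
  rw [← mul_assoc] at hden
  have hden_ne : 2 * (z - 1) ^ k ≠ 0 :=
    mul_ne_zero two_ne_zero (pow_ne_zero k (sub_ne_zero.mpr hz1))
  have h := hasDerivAt_div_of_eq_mul (hasDerivAt_trace_add_mul_sqrt hq hdisc hR hz1 hz) hden hden_ne
  rwa [add_sub_cancel_right] at h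

lemma exists_quotient_eq_zero_of_gap (hq : q ≠ 0)
    (hdisc : τ ^ 2 - 4 * (X - 1) ^ (2 * k) = q ^ 2 * p₀)
    (hR : (X - 1) * derivative τ - C (k : ℝ) * τ = q * R) {a b : ℝ} (hab : a < b)
    (h1 : (1 : ℝ) ∉ Set.Icc a b) (ha : p₀.eval a = 0) (hb : p₀.eval b = 0)
    (hpos : ∀ z ∈ Set.Ioo a b, 0 < p₀.eval z) : ∃ y ∈ Set.Ioo a b, R.eval y = 0 := by
  have hne_one : ∀ z ∈ Set.Icc a b, z ≠ 1 := fun z hz => ne_of_mem_of_not_mem hz h1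
  have hnonneg : ∀ z ∈ Set.Icc a b, 0 ≤ p₀.eval z := by
    intro z hz
    rw [← closure_Ioo hab.ne] at hz
    exact closure_minimal (fun w hw => (hpos w hw).le)
      (isClosed_le continuous_const p₀.continuous) hz
  have hne : ∀ z ∈ Set.Icc a b, symbolEigenvalue k τ q p₀ z ≠ 0 := fun z hz =>
    symbolEigenvalue_ne_zero hdisc (hne_one z hz) (hnonneg z hz)
  have hcont : ContinuousOn (symbolEigenvalue k τ q p₀) (Set.Icc a b) :=
    (continuousOn_symbolEigenvalue k τ q p₀).mono hne_one
  have hends : symbolEigenvalue k τ q p₀ a = symbolEigenvalue k τ q p₀ b := by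
    refine eq_of_sq_eq_sq_of_isPreconnected isPreconnected_Icc hcont hne
      (Set.left_mem_Icc.mpr hab.le) (Set.right_mem_Icc.mpr hab.le) ?_
    rw [symbolEigenvalue_sq_of_isRoot hdisc (hne_one a (Set.left_mem_Icc.mpr hab.le)) ha,
      symbolEigenvalue_sq_of_isRoot hdisc (hne_one b (Set.right_mem_Icc.mpr hab.le)) hb]
  obtain ⟨y, hy, hy0⟩ := exists_hasDerivAt_eq_zero hab hcont hends fun z hz =>
    hasDerivAt_symbolEigenvalue hq hdisc hR (hne_one z (Set.Ioo_subset_Icc_self hz)) (hpos z hz)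
  have hyI := Set.Ioo_subset_Icc_self hy
  refine ⟨y, hy, ?_⟩
  simpa [hne y hyI, sub_ne_zero.mpr (hne_one y hyI), (Real.sqrt_pos.mpr (hpos y hy)).ne'] using hy0

end SymbolEigenvalue

section Gaps

/-- The closed gaps `[lo i, hi i]` are nondegenerate, pairwise disjoint and contained in the
negative half-line; the open gaps are the intervals `I_ℓ` with `ℓ ≥ 1`. -/
structure IsGapFamily {ι : Type*} (lo hi : ι → ℝ) : Prop where
  lt (i : ι) : lo i < hi i
  neg (i : ι) : hi i < 0
  disjoint : Pairwise (Function.onFun Disjoint fun i => Set.Icc (lo i) (hi i))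

lemma IsGapFamily.neg_of_mem_Ioo {ι : Type*} {lo hi : ι → ℝ} (h : IsGapFamily lo hi) {i : ι} {z : ℝ}
    (hz : z ∈ Set.Ioo (lo i) (hi i)) : z < 0 :=
  hz.2.trans (h.neg i)

lemma IsGapFamily.pairwise_disjoint_option {ι : Type*} {lo hi : ι → ℝ} (h : IsGapFamily lo hi)
    (b : ℝ) : Pairwise (Function.onFun Disjoint fun o : Option ι =>
      Set.Icc (o.elim 0 lo) (o.elim b hi)) := by
  have hnone : ∀ i, Disjoint (Set.Icc 0 b) (Set.Icc (lo i) (hi i)) := fun i =>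
    Set.disjoint_left.mpr fun _ hz0 hzi => (hzi.2.trans_lt (h.neg i)).not_ge hz0.1
  rintro (_ | i) (_ | j) hij
  · exact absurd rfl hij
  · exact hnone j
  · exact (hnone i).symm
  · exact h.disjoint fun hij' => hij (congrArg some hij')

/-- The monic polynomial whose roots are the end points of the gaps, so that `p₀` is a positive
multiple of `X * gapPolynomial lo hi`. -/
noncomputable def gapPolynomial {ι : Type*} [Fintype ι] (lo hi : ι → ℝ) : ℝ[X] :=
  ∏ i, (X - C (lo i)) * (X - C (hi i))

/-- The polynomial whose zeros `z ≠ 1` with `D(z) ≠ 0` are the solutions of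
`z R(z) ^ 2 / ((z - 1) ^ 2 D(z)) = t`. For `p₀ = a X D` this is the equation `g(z) ^ 2 = t / a`. -/
noncomputable def levelPolynomial (R D : ℝ[X]) (t : ℝ) : ℝ[X] :=
  X * R ^ 2 - C t * ((X - 1) ^ 2 * D)

lemma eval_levelPolynomial (R D : ℝ[X]) (t z : ℝ) :
    (levelPolynomial R D t).eval z = z * R.eval z ^ 2 - t * ((z - 1) ^ 2 * D.eval z) := by
  simp [levelPolynomial]

variable {ι : Type*} [Fintype ι] {lo hi : ι → ℝ} {R : ℝ[X]} {t z : ℝ}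

lemma gapPolynomial_monic (lo hi : ι → ℝ) : (gapPolynomial lo hi).Monic :=
  monic_prod_of_monic _ _ fun i _ => (monic_X_sub_C (lo i)).mul (monic_X_sub_C (hi i))

lemma natDegree_gapPolynomial (lo hi : ι → ℝ) :
    (gapPolynomial lo hi).natDegree = 2 * Fintype.card ι := by
  have hfactor : ∀ i, ((X - C (lo i)) * (X - C (hi i))).natDegree = 2 := fun i => by
    rw [(monic_X_sub_C (lo i)).natDegree_mul (monic_X_sub_C (hi i)), natDegree_X_sub_C,
      natDegree_X_sub_C]
  rw [gapPolynomial, natDegree_prod_of_monic _ _ fun i _ =>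
    (monic_X_sub_C (lo i)).mul (monic_X_sub_C (hi i))]
  simp [hfactor, mul_comm]

lemma eval_gapPolynomial (lo hi : ι → ℝ) (z : ℝ) :
    (gapPolynomial lo hi).eval z = ∏ i, (z - lo i) * (z - hi i) := by
  simp [gapPolynomial, eval_prod]

lemma eval_gapPolynomial_lo (lo hi : ι → ℝ) (i : ι) : (gapPolynomial lo hi).eval (lo i) = 0 := by
  rw [eval_gapPolynomial]
  exact Finset.prod_eq_zero (Finset.mem_univ i) (by simp)

lemma eval_gapPolynomial_hi (lo hi : ι → ℝ) (i : ι) : (gapPolynomial lo hi).eval (hi i) = 0 := by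
  rw [eval_gapPolynomial]
  exact Finset.prod_eq_zero (Finset.mem_univ i) (by simp)

lemma sub_mul_sub_pos_of_notMem_Icc {K : Type*} [CommRing K] [LinearOrder K]
    [IsStrictOrderedRing K] {a b z : K} (hab : a ≤ b) (hz : z ∉ Set.Icc a b) :
    0 < (z - a) * (z - b) := by
  rcases lt_or_ge z a with hza | haz
  · exact mul_pos_of_neg_of_neg (sub_neg.mpr hza) (sub_neg.mpr (hza.trans_le hab))
  · have hbz : b < z := not_le.mp fun hzb => hz ⟨haz, hzb⟩
    exact mul_pos (sub_pos.mpr (hab.trans_lt hbz)) (sub_pos.mpr hbz)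

namespace IsGapFamily

lemma eval_gapPolynomial_pos (h : IsGapFamily lo hi) (hz : 0 ≤ z) :
    0 < (gapPolynomial lo hi).eval z := by
  rw [eval_gapPolynomial]
  exact Finset.prod_pos fun i _ => sub_mul_sub_pos_of_notMem_Icc (h.lt i).le fun hzi =>
    (hzi.2.trans_lt (h.neg i)).not_ge hz

lemma eval_gapPolynomial_neg (h : IsGapFamily lo hi) {i : ι} (hz : z ∈ Set.Ioo (lo i) (hi i)) :
    (gapPolynomial lo hi).eval z < 0 := by
  classical
  rw [eval_gapPolynomial, ← Finset.mul_prod_erase _ _ (Finset.mem_univ i)]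
  refine mul_neg_of_neg_of_pos
    (mul_neg_of_pos_of_neg (sub_pos.mpr hz.1) (sub_neg.mpr hz.2)) (Finset.prod_pos fun j hj => ?_)
  exact sub_mul_sub_pos_of_notMem_Icc (h.lt j).le
    (Set.disjoint_left.mp (h.disjoint (Finset.ne_of_mem_erase hj).symm)
      (Set.Ioo_subset_Icc_self hz))

lemma roots_of_root_mem_gap (h : IsGapFamily lo hi) (hR : R ≠ 0)
    (hdeg : R.natDegree ≤ Fintype.card ι)
    (hroot : ∀ i, ∃ y ∈ Set.Ioo (lo i) (hi i), R.eval y = 0) :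
    R.roots.Nodup ∧ ∀ r, R.eval r = 0 → ∃ i, r ∈ Set.Ioo (lo i) (hi i) := by
  choose y hy hRy using hroot
  have hinj : Function.Injective y :=
    injective_of_mem_of_pairwise_disjoint h.disjoint fun i => Set.Ioo_subset_Icc_self (hy i)
  have hroots := roots_eq_map_of_injective hR hinj hRy hdeg
  refine ⟨hroots ▸ Finset.univ.nodup.map hinj, fun r hr => ?_⟩
  have hmem : r ∈ R.roots := (mem_roots hR).mpr hr
  obtain ⟨i, -, rfl⟩ := Multiset.mem_map.mp (hroots ▸ hmem)
  exact ⟨i, hy i⟩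

end IsGapFamily

lemma natDegree_sub_one_sq_mul_gapPolynomial (lo hi : ι → ℝ) :
    ((X - 1) ^ 2 * gapPolynomial lo hi).natDegree = 2 + 2 * Fintype.card ι := by
  have hX : (X - 1 : ℝ[X]).Monic := monic_X_sub_C (1 : ℝ)
  have hXdeg : (X - 1 : ℝ[X]).natDegree = 1 := natDegree_X_sub_C (1 : ℝ)
  rw [(hX.pow 2).natDegree_mul (gapPolynomial_monic lo hi), hX.natDegree_pow, hXdeg, mul_one,
    natDegree_gapPolynomial]

lemma natDegree_X_mul_sq_le (R : ℝ[X]) : (X * R ^ 2).natDegree ≤ 1 + 2 * R.natDegree :=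
  natDegree_mul_le_of_le natDegree_X_le natDegree_pow_le

lemma natDegree_levelPolynomial_le (hdeg : R.natDegree ≤ Fintype.card ι) (t : ℝ) :
    (levelPolynomial R (gapPolynomial lo hi) t).natDegree ≤ 2 * Fintype.card (Option ι) := by
  rw [Fintype.card_option]
  refine natDegree_sub_le_of_le ((natDegree_X_mul_sq_le R).trans (by omega))
    ((natDegree_C_mul_le _ _).trans ?_) |>.trans (max_self _).le
  rw [natDegree_sub_one_sq_mul_gapPolynomial]
  omega

lemma exists_levelPolynomial_neg (h : IsGapFamily lo hi) (hdeg : R.natDegree ≤ Fintype.card ι)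
    (ht : 0 < t) : ∃ b > 1, (levelPolynomial R (gapPolynomial lo hi) t).eval b < 0 := by
  have hdeg_lt : (X * R ^ 2).degree < ((X - 1) ^ 2 * gapPolynomial lo hi).degree :=
    degree_lt_degree <| by
      rw [natDegree_sub_one_sq_mul_gapPolynomial]
      have hle := natDegree_X_mul_sq_le R
      omega
  have hlim := div_tendsto_atTop_zero_of_degree_lt _ _ hdeg_lt
  obtain ⟨b, hbt, hb⟩ := ((hlim.eventually_lt_const ht).and (Filter.eventually_gt_atTop 1)).exists
  have hden : 0 < ((X - 1) ^ 2 * gapPolynomial lo hi).eval b := by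
    have hD := h.eval_gapPolynomial_pos (zero_le_one.trans hb.le)
    simpa using mul_pos (pow_pos (sub_pos.mpr hb) 2) hD
  refine ⟨b, hb, ?_⟩
  rw [div_lt_iff₀ hden] at hbt
  simpa [levelPolynomial] using hbt

namespace IsGapFamily

lemma nodup_roots_levelPolynomial (h : IsGapFamily lo hi) (hR : R ≠ 0)
    (hdeg : R.natDegree ≤ Fintype.card ι)
    (hroot : ∀ i, ∃ y ∈ Set.Ioo (lo i) (hi i), R.eval y = 0) (ht : 0 < t) :
    (levelPolynomial R (gapPolynomial lo hi) t).roots.Nodup := by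
  obtain ⟨b, hb1, hb⟩ := exists_levelPolynomial_neg h hdeg ht
  have hR_ne : ∀ w, (∀ i, w ∉ Set.Ioo (lo i) (hi i)) → R.eval w ≠ 0 := fun w hw hRw =>
    let ⟨i, hwi⟩ := (h.roots_of_root_mem_gap hR hdeg hroot).2 w hRw
    hw i hwi
  have hend : ∀ w < 0, (gapPolynomial lo hi).eval w = 0 →
      (levelPolynomial R (gapPolynomial lo hi) t).eval w < 0 := by
    intro w hw hDw
    have hRw : R.eval w ≠ 0 := hR_ne w fun i hwi => (h.eval_gapPolynomial_neg hwi).ne hDw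
    rw [eval_levelPolynomial, hDw, mul_zero, mul_zero, sub_zero]
    exact mul_neg_of_neg_of_pos hw (by positivity)
  have hzero : (levelPolynomial R (gapPolynomial lo hi) t).eval 0 < 0 := by
    have hD := h.eval_gapPolynomial_pos le_rfl
    rw [eval_levelPolynomial]
    nlinarith
  have hone : 0 < (levelPolynomial R (gapPolynomial lo hi) t).eval 1 := by
    have hR1 : R.eval 1 ≠ 0 := hR_ne 1 fun i hi1 => (h.neg_of_mem_Ioo hi1).not_gt one_pos
    simpa [eval_levelPolynomial] using sq_pos_of_ne_zero hR1
  refine nodup_roots_of_neg_pos_neg (ι := Option ι) (natDegree_levelPolynomial_le hdeg t)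
    (a := fun o => o.elim 0 lo) (b := fun o => o.elim b hi) (h.pairwise_disjoint_option b) ?_ ?_ ?_
  · rintro (_ | i)
    · exact hzero
    · exact hend _ ((h.lt i).trans (h.neg i)) (eval_gapPolynomial_lo lo hi i)
  · rintro (_ | i)
    · exact hb
    · exact hend _ (h.neg i) (eval_gapPolynomial_hi lo hi i)
  · rintro (_ | i)
    · exact ⟨1, ⟨one_pos, hb1⟩, hone⟩
    · obtain ⟨y, hy, hRy⟩ := hroot i
      refine ⟨y, hy, ?_⟩
      have hD := h.eval_gapPolynomial_neg hy
      have hy1 : y - 1 ≠ 0 := sub_ne_zero.mpr ((h.neg_of_mem_Ioo hy).trans one_pos).ne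
      rw [eval_levelPolynomial, hRy]
      have hty : 0 < t * (y - 1) ^ 2 := by positivity
      nlinarith

end IsGapFamily

end Gaps

section CriticalPoints

lemma mul_eq_mul_of_deriv_div_eq_zero {𝕜 : Type*} [NontriviallyNormedField 𝕜] {f g : 𝕜 → 𝕜}
    {f' g' x : 𝕜} (hf : HasDerivAt f f' x) (hg : HasDerivAt g g' x) (hx : g x ≠ 0)
    (h : deriv (f / g) x = 0) : f' * g x = f x * g' := by
  rw [(hf.div hg hx).deriv] at h
  exact sub_eq_zero.mp ((div_eq_zero_iff.mp h).resolve_right (pow_ne_zero 2 hx))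

variable {R D p₀ : ℝ[X]} {a z : ℝ}

lemma aztecg_mul_eq (R : ℝ[X]) (hz1 : z ≠ 1) (hz : 0 < p₀.eval z) :
    aztecg R p₀ z * ((z - 1) * √(p₀.eval z)) = z * R.eval z :=
  div_mul_cancel₀ _ (mul_ne_zero (sub_ne_zero.mpr hz1) (Real.sqrt_pos.mpr hz).ne')

lemma two_mul_eval_derivative_of_deriv_aztecg_eq_zero (hz1 : z ≠ 1) (hz : 0 < p₀.eval z)
    (hcrit : deriv (aztecg R p₀) z = 0) :
    2 * ((z - 1) * √(p₀.eval z)) * (derivative (X * R)).eval z =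
      aztecg R p₀ z * (derivative ((X - 1) ^ 2 * p₀)).eval z := by
  have hsqrt : √(p₀.eval z) ^ 2 = p₀.eval z := Real.sq_sqrt hz.le
  have hsqrt_ne : √(p₀.eval z) ≠ 0 := (Real.sqrt_pos.mpr hz).ne'
  have hden_ne : (z - 1) * √(p₀.eval z) ≠ 0 := mul_ne_zero (sub_ne_zero.mpr hz1) hsqrt_ne
  have hvalue := aztecg_mul_eq R hz1 hz
  have hden := ((hasDerivAt_id z).sub_const 1).mul ((p₀.hasDerivAt z).sqrt hz.ne')
  have haztecg : aztecg R p₀ = fun w => (X * R).eval w / ((w - 1) * √(p₀.eval w)) := by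
    funext w
    simp only [aztecg, eval_mul, eval_X]
  rw [haztecg] at hcrit
  have hnum := mul_eq_mul_of_deriv_div_eq_zero ((X * R).hasDerivAt z) hden hden_ne hcrit
  simp only [Pi.mul_apply, id, eval_mul, eval_X, one_mul] at hnum
  have hsqrt_deriv : 2 * √(p₀.eval z) * ((derivative p₀).eval z / (2 * √(p₀.eval z))) =
      (derivative p₀).eval z := mul_div_cancel₀ _ (mul_ne_zero two_ne_zero hsqrt_ne)
  have hden_sq : (derivative ((X - 1) ^ 2 * p₀)).eval z = 2 * ((z - 1) * √(p₀.eval z)) *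
      (√(p₀.eval z) + (z - 1) * ((derivative p₀).eval z / (2 * √(p₀.eval z)))) := by
    simp only [derivative_mul, derivative_sq, derivative_sub, derivative_X, derivative_one,
      eval_add, eval_mul, eval_pow, eval_sub, eval_X, eval_one, C_ofNat, eval_ofNat, sub_zero]
    linear_combination -2 * (z - 1) * hsqrt - (z - 1) ^ 2 * hsqrt_deriv
  apply mul_left_cancel₀ hden_ne
  rw [hden_sq]
  linear_combination 2 * ((z - 1) * √(p₀.eval z)) * hnum
    - 2 * ((z - 1) * √(p₀.eval z)) *
      (√(p₀.eval z) + (z - 1) * ((derivative p₀).eval z / (2 * √(p₀.eval z)))) * hvalue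

lemma eval_eq_zero_of_deriv_aztecg_eq_zero (hz0 : z ≠ 0) (hz1 : z ≠ 1) (hz : 0 < p₀.eval z)
    (hcrit : deriv (aztecg R p₀) z = 0) (hg : aztecg R p₀ z = 0) :
    R.eval z = 0 ∧ (derivative R).eval z = 0 := by
  have hne : (z - 1) * √(p₀.eval z) ≠ 0 :=
    mul_ne_zero (sub_ne_zero.mpr hz1) (Real.sqrt_pos.mpr hz).ne'
  have hRz : R.eval z = 0 := by simpa [hg, hz0] using aztecg_mul_eq R hz1 hz
  have hderiv := two_mul_eval_derivative_of_deriv_aztecg_eq_zero hz1 hz hcrit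
  rw [hg, zero_mul, mul_eq_zero, or_iff_right (mul_ne_zero two_ne_zero hne)] at hderiv
  exact ⟨hRz, by simpa [derivative_mul, hRz, hz0] using hderiv⟩

lemma eval_levelPolynomial_of_deriv_aztecg_eq_zero (hz0 : z ≠ 0) (hz1 : z ≠ 1)
    (hz : 0 < (C a * (X * D)).eval z) (hcrit : deriv (aztecg R (C a * (X * D))) z = 0) :
    (levelPolynomial R D (a * aztecg R (C a * (X * D)) z ^ 2)).eval z = 0 ∧
      (derivative (levelPolynomial R D (a * aztecg R (C a * (X * D)) z ^ 2))).eval z = 0 := by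
  have hvalue := aztecg_mul_eq R hz1 hz
  have hderiv := two_mul_eval_derivative_of_deriv_aztecg_eq_zero hz1 hz hcrit
  have hsqrt : √((C a * (X * D)).eval z) ^ 2 = (C a * (X * D)).eval z := Real.sq_sqrt hz.le
  generalize aztecg R (C a * (X * D)) z = c at hvalue hderiv ⊢
  have hmul : X * levelPolynomial R D (a * c ^ 2) =
      (X * R) ^ 2 - C (c ^ 2) * ((X - 1) ^ 2 * (C a * (X * D))) := by
    rw [levelPolynomial, C_mul]
    ring
  have hroot : (X * levelPolynomial R D (a * c ^ 2)).eval z = 0 := by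
    rw [hmul]
    simp only [eval_sub, eval_mul, eval_pow, eval_X, eval_C, eval_one] at hvalue hsqrt ⊢
    linear_combination -(z * R.eval z + c * ((z - 1) * √(a * (z * D.eval z)))) * hvalue
      + c ^ 2 * (z - 1) ^ 2 * hsqrt
  have hroot' : (derivative (X * levelPolynomial R D (a * c ^ 2))).eval z = 0 := by
    rw [hmul, derivative_sub, derivative_sq, derivative_C_mul, C_ofNat, eval_sub]
    simp only [eval_mul, eval_ofNat, eval_C, eval_X]
    linear_combination c * hderiv - 2 * (derivative (X * R)).eval z * hvalue
  have hlevel : (levelPolynomial R D (a * c ^ 2)).eval z = 0 := by simpa [hz0] using hroot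
  exact ⟨hlevel, by simpa [derivative_mul, hlevel, hz0] using hroot'⟩

variable {ι : Type*} [Fintype ι] {lo hi : ι → ℝ}

namespace IsGapFamily

lemma eval_pos_of_pos (h : IsGapFamily lo hi) (ha : 0 < a) (hz : 0 < z) :
    0 < (C a * (X * gapPolynomial lo hi)).eval z := by
  simpa using mul_pos ha (mul_pos hz (h.eval_gapPolynomial_pos hz.le))

lemma eval_pos_of_mem_Ioo (h : IsGapFamily lo hi) (ha : 0 < a) {i : ι}
    (hz : z ∈ Set.Ioo (lo i) (hi i)) : 0 < (C a * (X * gapPolynomial lo hi)).eval z := by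
  simpa using mul_pos ha
    (mul_pos_of_neg_of_neg (h.neg_of_mem_Ioo hz) (h.eval_gapPolynomial_neg hz))

theorem deriv_aztecg_ne_zero (h : IsGapFamily lo hi) (hR : R ≠ 0)
    (hdeg : R.natDegree ≤ Fintype.card ι)
    (hroot : ∀ i, ∃ y ∈ Set.Ioo (lo i) (hi i), R.eval y = 0) (ha : 0 < a) (hz1 : z ≠ 1)
    (hz : 0 < (C a * (X * gapPolynomial lo hi)).eval z) :
    deriv (aztecg R (C a * (X * gapPolynomial lo hi))) z ≠ 0 := by
  intro hcrit
  have hz0 : z ≠ 0 := by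
    rintro rfl
    simp at hz
  by_cases hg : aztecg R (C a * (X * gapPolynomial lo hi)) z = 0
  · obtain ⟨hRz, hRz'⟩ := eval_eq_zero_of_deriv_aztecg_eq_zero hz0 hz1 hz hcrit hg
    have hnodup := (h.roots_of_root_mem_gap hR hdeg hroot).1
    exact eval_derivative_ne_zero_of_nodup_roots hR hnodup hRz hRz'
  · obtain ⟨hMz, hMz'⟩ := eval_levelPolynomial_of_deriv_aztecg_eq_zero hz0 hz1 hz hcrit
    have ht : 0 < a * aztecg R (C a * (X * gapPolynomial lo hi)) z ^ 2 := by positivity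
    obtain ⟨b, -, hb⟩ := exists_levelPolynomial_neg h hdeg ht
    refine eval_derivative_ne_zero_of_nodup_roots ?_
      (h.nodup_roots_levelPolynomial hR hdeg hroot ht) hMz hMz'
    exact fun h0 => hb.ne (by rw [h0, eval_zero])

end IsGapFamily

end CriticalPoints

section StrictAnti

/-- The left end point `x_{2ℓ}` of the interval `I_ℓ`, where `ℓ = i + 1`. -/
def gapLeft {n : ℕ} (x : Fin (2 * n + 1) → ℝ) (i : Fin n) : ℝ := x ⟨2 * i + 2, by omega⟩

/-- The right end point `x_{2ℓ-1}` of the interval `I_ℓ`, where `ℓ = i + 1`. -/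
def gapRight {n : ℕ} (x : Fin (2 * n + 1) → ℝ) (i : Fin n) : ℝ := x ⟨2 * i + 1, by omega⟩

lemma isGapFamily_gapLeft_gapRight {n : ℕ} {x : Fin (2 * n + 1) → ℝ} (hx : StrictAnti x)
    (hx0 : x 0 = 0) : IsGapFamily (gapLeft x) (gapRight x) where
  lt i := hx (Fin.mk_lt_mk.mpr (Nat.lt_succ_self _))
  neg i := hx0 ▸ hx (Fin.mk_lt_mk.mpr (Nat.succ_pos _))
  disjoint := (pairwise_disjoint_on _).mpr fun i j hij => by
    have hsep : gapRight x j < gapLeft x i := hx (Fin.mk_lt_mk.mpr (by omega))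
    exact Set.disjoint_left.mpr fun _ hi hj => (hj.2.trans_lt hsep).not_ge hi.1

lemma prod_univ_two_mul_add_one {M : Type*} [CommMonoid M] {n : ℕ} (f : Fin (2 * n + 1) → M) :
    ∏ i, f i = f 0 * ∏ i : Fin n, f ⟨2 * i + 2, by omega⟩ * f ⟨2 * i + 1, by omega⟩ := by
  induction n with
  | zero => simp
  | succ n ih =>
    rw [Fin.prod_univ_castSucc (n := n), ← mul_assoc]
    change ∏ i : Fin (2 * n + 1 + 1 + 1), f i = _
    rw [Fin.prod_univ_castSucc, Fin.prod_univ_castSucc, ih (fun i => f i.castSucc.castSucc),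
      mul_assoc]
    exact congrArg _ (mul_comm _ _)

lemma eq_C_mul_X_mul_gapPolynomial {n : ℕ} {f : ℝ[X]} (hdeg : f.natDegree = 2 * n + 1)
    {x : Fin (2 * n + 1) → ℝ} (hx : Function.Injective x) (hx0 : x 0 = 0)
    (hroot : ∀ i, f.eval (x i) = 0) :
    f = C f.leadingCoeff * (X * gapPolynomial (gapLeft x) (gapRight x)) := by
  have hf : f ≠ 0 := ne_zero_of_natDegree_gt (n := 0) (by omega)
  conv_lhs => rw [eq_C_leadingCoeff_mul_prod_of_injective hf hx hroot (by simpa using hdeg),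
    prod_univ_two_mul_add_one, hx0, C_0, sub_zero]
  rfl

end StrictAnti

theorem stmt17_general (k k' : ℕ) (hk' : 1 ≤ k') (τ q p₀ R : ℝ[X]) (hq : q ≠ 0)
    (hdisc : τ ^ 2 - 4 * (X - 1) ^ (2 * k) = q ^ 2 * p₀)
    (hR : (X - 1) * derivative τ - C (k : ℝ) * τ = q * R) (hRdeg : R.natDegree ≤ k' - 1)
    (hp₀lead : 0 < p₀.leadingCoeff) (hp₀deg : p₀.natDegree = 2 * k' - 1)
    (x : Fin (2 * k' - 1) → ℝ) (hx0 : x ⟨0, by omega⟩ = 0) (hxanti : StrictAnti x)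
    (hxroot : ∀ i, p₀.eval (x i) = 0) :
    (∀ z ∈ Set.Ioi (0 : ℝ) \ {1}, deriv (aztecg R p₀) z ≠ 0) ∧
    (∀ ℓ : ℕ, ∀ _h1 : 1 ≤ ℓ, ∀ _h2 : ℓ ≤ k' - 1,
      ∀ z ∈ Set.Ioo (x ⟨2 * ℓ, by omega⟩) (x ⟨2 * ℓ - 1, by omega⟩),
        deriv (aztecg R p₀) z ≠ 0) := by
  obtain ⟨n, rfl⟩ : ∃ n, k' = n + 1 := ⟨k' - 1, by omega⟩
  have hgap : IsGapFamily (gapLeft (n := n) x) (gapRight x) :=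
    isGapFamily_gapLeft_gapRight hxanti hx0
  have hp₀ := eq_C_mul_X_mul_gapPolynomial (n := n) hp₀deg hxanti.injective hx0 hxroot
  have hne : q ^ 2 * p₀ ≠ 0 :=
    mul_ne_zero (pow_ne_zero 2 hq) (leadingCoeff_ne_zero.mp hp₀lead.ne')
  have hRne : R ≠ 0 := quotient_ne_zero_of_isRoot hne hdisc hR (hxroot _) (hx0.trans_ne zero_ne_one)
  generalize p₀.leadingCoeff = a at hp₀ hp₀lead
  subst hp₀
  have hroot : ∀ i : Fin n, ∃ y ∈ Set.Ioo (gapLeft x i) (gapRight x i), R.eval y = 0 := fun i =>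
    exists_quotient_eq_zero_of_gap hq hdisc hR (hgap.lt i)
      (fun h1 => (h1.2.trans_lt (hgap.neg i)).not_ge zero_le_one) (hxroot _) (hxroot _)
      fun z hz => hgap.eval_pos_of_mem_Ioo hp₀lead hz
  have hderiv := fun z =>
    hgap.deriv_aztecg_ne_zero (z := z) hRne (by simpa using hRdeg) hroot hp₀lead
  refine ⟨fun z hz => hderiv z hz.2 (hgap.eval_pos_of_pos hp₀lead hz.1), fun ℓ h1 h2 z hz => ?_⟩
  obtain ⟨m, rfl⟩ : ∃ m, ℓ = m + 1 := ⟨ℓ - 1, by omega⟩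
  have hz : z ∈ Set.Ioo (gapLeft (n := n) x ⟨m, by omega⟩) (gapRight x ⟨m, by omega⟩) := hz
  exact hderiv z ((hgap.neg_of_mem_Ioo hz).trans one_pos).ne (hgap.eval_pos_of_mem_Ioo hp₀lead hz)

/-- the derivative of `g` is nonzero on `I₀ = (0,∞)∖{1}` and on each
`I_ℓ = (x_{2ℓ}, x_{2ℓ−1})` for `ℓ = 1,…,k′−1`. -/
theorem stmt17 (k : ℕ) (hk : 1 ≤ k) (α β : Fin k → ℝ)
    (hα : ∀ m, 0 < α m) (hβ : ∀ m, 0 < β m)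
    (hprod : ∏ m, α m = ∏ m, β m)
    (trT p : Polynomial ℝ)
    (htr : ∀ z : ℂ, Polynomial.aeval z trT = Matrix.trace (aztecT α β z))
    (hp : ∀ z : ℂ, Polynomial.aeval z p
        = (Matrix.trace (aztecT α β z)) ^ 2 - 4 * (z - 1) ^ (2 * k))
    (k' : ℕ) (hk'1 : 1 ≤ k') (hk'k : k' ≤ k)
    (q p₀ : Polynomial ℝ) (hq : q.Monic) (hp₀sf : Squarefree p₀)
    (hp₀lead : 0 < p₀.leadingCoeff) (hfact : p = q ^ 2 * p₀)
    (hp₀deg : p₀.natDegree = 2 * k' - 1)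
    (x : Fin (2 * k' - 1) → ℝ) (hx0 : x ⟨0, by omega⟩ = 0) (hxanti : StrictAnti x)
    (hxroot : ∀ i, p₀.eval (x i) = 0)
    (R : Polynomial ℝ)
    (hR : (X - 1) * Polynomial.derivative trT - Polynomial.C (k : ℝ) * trT = q * R)
    (hRdeg : R.natDegree = k' - 1) :
    (∀ z ∈ Set.Ioi (0 : ℝ) \ {1}, deriv (aztecg R p₀) z ≠ 0) ∧
    (∀ ℓ : ℕ, ∀ _h1 : 1 ≤ ℓ, ∀ _h2 : ℓ ≤ k' - 1,
      ∀ z ∈ Set.Ioo (x ⟨2 * ℓ, by omega⟩) (x ⟨2 * ℓ - 1, by omega⟩),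
        deriv (aztecg R p₀) z ≠ 0) :=
  stmt17_general k k' hk'1 trT q p₀ R hq.ne_zero
    (eq_of_forall_aeval_eq fun z : ℂ => by simp [← hfact, hp, htr, map_ofNat (aeval z) 4])
    hR hRdeg.le hp₀lead hp₀deg x hx0 hxanti hxroot
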